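/- Let h be a separable complex Hilbert space and let A, B be bounded selfadjoint operators on h with 0 ≤ A ≤ 1 and 0 ≤ B ≤ 1 such that Q = A − B is Hilbert–Schmidt. Let (P_n) be a nondecreasing sequence of finite-rank orthogonal projections on h with P_n → 1 strongly, and set A_n = P_n A P_n, B_n = P_n B P_n, Q_n = A_n − B_n. Then for every fixed λ ∈ (−1,1) and t ≥ 0: lim_{n→∞} tr[ R_{λ,t}(B_n) Q_n R_{λ,t}(A_n) Q_n R_{λ,t}(B_n) ] = tr[ R_{λ,t}(B) Q R_{λ,t}(A) Q R_{λ,t}(B) ], where tr denotes the trace of a positive bounded operator (all traces here are finite). -/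

import Mathlib

/-!
Write `X`, `Y` for the resolvents of `A`, `B`, and `Xₙ`, `Yₙ` for those of the compressions.
Since `Y` and `Q` are selfadjoint, `⟨x, Y Q X Q Y x⟩ = ⟨W x, X W x⟩` with `W = Q Y`, so the trace
is the Hilbert–Schmidt inner product of `W` and `X W` (`posTrace_eq_inner`); likewise for `n`
with `Wₙ = Qₙ Yₙ`. It therefore suffices that `Wₙ → W` and `Xₙ Wₙ → X W` in Hilbert–Schmidt norm.

The operators `1 + λ(1−2C) + t` are coercive with constant `1 − |λ| + t`, uniformly in
`0 ≤ C ≤ 1`. Hence the resolvents are uniformly bounded and positive, and by the second resolvent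
identity `Xₙ → X` and `Yₙ → Y` strongly (`resolventOp_tendsto`).

Left multiplication by bounded, strongly convergent sequences preserves Hilbert–Schmidt
convergence (`hsSq_mul_tendsto`, dominated convergence). Right factors are handled through
invariance of the Hilbert–Schmidt norm under adjoints (`hsSq_star`): from `Yₙ Pₙ Q → Y Q` follows
`Q Pₙ Yₙ → Q Y`, and then `Wₙ = Pₙ (Q Pₙ Yₙ) → Q Y = W` and `Xₙ Wₙ → X W`.
-/

open Filter
open scoped InnerProductSpace ENNReal Topology

/-- The resolvent `R_{λ,t}(C) = (1 + λ(1−2C) + t)⁻¹` of a bounded operator `C`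
(defined via `Ring.inverse`, which gives the genuine inverse when it exists). -/
noncomputable def resolventOp {H : Type*} [NormedAddCommGroup H] [InnerProductSpace ℂ H]
    [CompleteSpace H] (l t : ℝ) (C : H →L[ℂ] H) : H →L[ℂ] H :=
  Ring.inverse (1 + (l:ℂ) • (1 - 2 • C) + (t:ℂ) • 1)

/-- The trace of a positive bounded operator `T`, computed in the Hilbert basis `e` as
`∑_i ⟨e_i, T e_i⟩ ∈ [0,∞]`. -/
noncomputable def posTrace {H : Type*} [NormedAddCommGroup H] [InnerProductSpace ℂ H]
    [CompleteSpace H] {ι : Type*} (e : HilbertBasis ι ℂ H) (T : H →L[ℂ] H) : ℝ≥0∞ :=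
  ∑' i : ι, ENNReal.ofReal (⟪e i, T (e i)⟫_ℂ).re

/-! ### Resolvents -/

section Resolvent

variable {H : Type*} [NormedAddCommGroup H] [InnerProductSpace ℂ H] [CompleteSpace H]

/-- The operator `1 + λ(1−2C) + t` whose inverse is the resolvent. -/
noncomputable def resolventDen (l t : ℝ) (C : H →L[ℂ] H) : H →L[ℂ] H :=
  1 + (l:ℂ) • (1 - 2 • C) + (t:ℂ) • 1

theorem resolventDen_apply (l t : ℝ) (C : H →L[ℂ] H) (v : H) :
    resolventDen l t C v = ((1 + l + t : ℝ) : ℂ) • v - ((2 * l : ℝ) : ℂ) • C v := by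
  simp only [resolventDen, _root_.add_apply, _root_.smul_apply,
    _root_.sub_apply, one_apply_eq_self, two_smul]
  push_cast
  module

theorem resolventDen_coercive {l t : ℝ} {C : H →L[ℂ] H} (h0 : 0 ≤ C) (h1 : C ≤ 1) (v : H) :
    (1 - |l| + t) * ‖v‖ ^ 2 ≤ (⟪v, resolventDen l t C v⟫_ℂ).re := by
  have p0 : 0 ≤ (⟪v, C v⟫_ℂ).re :=
    ((ContinuousLinearMap.nonneg_iff_isPositive C).1 h0).re_inner_nonneg_right v
  have p1 : 0 ≤ (⟪v, (1 - C) v⟫_ℂ).re :=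
    ((ContinuousLinearMap.le_def C 1).1 h1).re_inner_nonneg_right v
  have hv : (⟪v, v⟫_ℂ).re = ‖v‖ ^ 2 := by
    simpa using (inner_self_eq_norm_sq (𝕜 := ℂ) v)
  rw [_root_.sub_apply, one_apply_eq_self, inner_sub_right,
    Complex.sub_re, hv] at p1
  rw [resolventDen_apply, inner_sub_right, inner_smul_right, inner_smul_right, Complex.sub_re,
    Complex.re_ofReal_mul, Complex.re_ofReal_mul, hv]
  rcases abs_cases l with ⟨h, h'⟩ | ⟨h, h'⟩ <;> rw [h] <;> nlinarith

theorem resolventDen_norm_le {l t : ℝ} {C : H →L[ℂ] H} (h0 : 0 ≤ C) (h1 : C ≤ 1) (v : H) :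
    (1 - |l| + t) * ‖v‖ ≤ ‖resolventDen l t C v‖ := by
  have h := resolventDen_coercive (l := l) (t := t) h0 h1 v
  have h2 : (⟪v, resolventDen l t C v⟫_ℂ).re ≤ ‖v‖ * ‖resolventDen l t C v‖ :=
    re_inner_le_norm (𝕜 := ℂ) v _
  rcases (norm_nonneg v).eq_or_lt with hv | hv
  · rw [← hv]; simp
  · nlinarith

theorem resolventDen_isUnit {l t : ℝ} {C : H →L[ℂ] H} (h0 : 0 ≤ C) (h1 : C ≤ 1)
    (hc : 0 < 1 - |l| + t) : IsUnit (resolventDen l t C) := by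
  refine ContinuousLinearMap.isUnit_of_forall_le_norm_inner_map _
    (c := ⟨1 - |l| + t, hc.le⟩) hc fun v => ?_
  have h := resolventDen_coercive (l := l) (t := t) h0 h1 v
  calc ‖v‖ ^ 2 * (1 - |l| + t) ≤ (⟪v, resolventDen l t C v⟫_ℂ).re := by linarith
    _ ≤ ‖⟪v, resolventDen l t C v⟫_ℂ‖ := Complex.re_le_norm _
    _ = _ := norm_inner_symm _ _

theorem resolventDen_resolventOp {l t : ℝ} {C : H →L[ℂ] H} (h0 : 0 ≤ C) (h1 : C ≤ 1)
    (hc : 0 < 1 - |l| + t) (u : H) : resolventDen l t C (resolventOp l t C u) = u := by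
  have := Ring.mul_inverse_cancel _ (resolventDen_isUnit h0 h1 hc)
  exact DFunLike.congr_fun this u

theorem resolventOp_resolventDen {l t : ℝ} {C : H →L[ℂ] H} (h0 : 0 ≤ C) (h1 : C ≤ 1)
    (hc : 0 < 1 - |l| + t) (u : H) : resolventOp l t C (resolventDen l t C u) = u := by
  have := Ring.inverse_mul_cancel _ (resolventDen_isUnit h0 h1 hc)
  exact DFunLike.congr_fun this u

theorem resolventOp_isSelfAdjoint (l t : ℝ) {C : H →L[ℂ] H} (hC : IsSelfAdjoint C) :
    IsSelfAdjoint (resolventOp l t C) := by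
  have r : ∀ x : ℝ, IsSelfAdjoint (x : ℂ) := fun x => Complex.conj_ofReal x
  have h1 : IsSelfAdjoint (1 : H →L[ℂ] H) := .one _
  refine IsSelfAdjoint.ringInverse ((h1.add ((r l).smul (h1.sub ?_))).add ((r t).smul h1))
  rw [two_smul]
  exact hC.add hC

theorem resolventOp_norm_apply_le {l t : ℝ} {C : H →L[ℂ] H} (h0 : 0 ≤ C) (h1 : C ≤ 1)
    (hc : 0 < 1 - |l| + t) (u : H) : ‖resolventOp l t C u‖ ≤ (1 - |l| + t)⁻¹ * ‖u‖ := by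
  have h := resolventDen_norm_le (l := l) (t := t) h0 h1 (resolventOp l t C u)
  rw [resolventDen_resolventOp h0 h1 hc] at h
  rwa [inv_mul_eq_div, le_div_iff₀ hc, mul_comm]

theorem resolventOp_inner_nonneg {l t : ℝ} {C : H →L[ℂ] H} (h0 : 0 ≤ C) (h1 : C ≤ 1)
    (hc : 0 < 1 - |l| + t) (u : H) : 0 ≤ (⟪u, resolventOp l t C u⟫_ℂ).re := by
  have h := resolventDen_coercive (l := l) (t := t) h0 h1 (resolventOp l t C u)
  rw [resolventDen_resolventOp h0 h1 hc] at h
  have h3 : (⟪u, resolventOp l t C u⟫_ℂ).re = (⟪resolventOp l t C u, u⟫_ℂ).re :=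
    inner_re_symm (𝕜 := ℂ) _ _
  rw [h3]
  exact le_trans (by positivity) h

/-- Strong resolvent continuity, from the second resolvent identity
`R(Cₙ) − R(C) = R(Cₙ) (D(C) − D(Cₙ)) R(C)`, where `D` is the denominator. -/
theorem resolventOp_tendsto {l t : ℝ} {C : H →L[ℂ] H} {Cn : ℕ → H →L[ℂ] H}
    (h0 : 0 ≤ C) (h1 : C ≤ 1) (hn0 : ∀ n, 0 ≤ Cn n) (hn1 : ∀ n, Cn n ≤ 1)
    (hc : 0 < 1 - |l| + t) (hlim : ∀ v, Tendsto (fun n => Cn n v) atTop (𝓝 (C v))) (u : H) :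
    Tendsto (fun n => resolventOp l t (Cn n) u) atTop (𝓝 (resolventOp l t C u)) := by
  set w := resolventOp l t C u with hw
  have hD : Tendsto (fun n => resolventDen l t (Cn n) w) atTop (𝓝 u) := by
    have : u = resolventDen l t C w := (resolventDen_resolventOp h0 h1 hc u).symm
    rw [this]
    simp only [resolventDen_apply]
    exact tendsto_const_nhds.sub ((hlim w).const_smul _)
  rw [tendsto_iff_norm_sub_tendsto_zero] at hD ⊢
  refine squeeze_zero (fun _ => norm_nonneg _) (fun n => ?_)
    (by simpa using hD.const_mul (1 - |l| + t)⁻¹)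
  have h := resolventOp_norm_apply_le (hn0 n) (hn1 n) hc (resolventDen l t (Cn n) w - u)
  rw [map_sub, resolventOp_resolventDen (hn0 n) (hn1 n) hc, norm_sub_rev] at h
  exact h

end Resolvent

/-! ### Compressions and strong limits -/

section Projection

variable {H : Type*} [NormedAddCommGroup H] [InnerProductSpace ℂ H] [CompleteSpace H]

theorem compress_nonneg {C P : H →L[ℂ] H} (hC : 0 ≤ C) (hP : IsSelfAdjoint P) :
    0 ≤ P * C * P := hP.conjugate_nonneg hC

theorem compress_le_one {C P : H →L[ℂ] H} (hC : C ≤ 1) (hP : IsSelfAdjoint P)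
    (hP2 : IsIdempotentElem P) : P * C * P ≤ 1 := by
  have h := star_left_conjugate_le_conjugate hC P
  rw [hP.star_eq, mul_one, hP2.eq] at h
  exact h.trans (IsStarProjection.le_one ⟨hP2, hP⟩)

theorem proj_norm_apply_le {P : H →L[ℂ] H} (hP : IsSelfAdjoint P)
    (hP2 : IsIdempotentElem P) (v : H) : ‖P v‖ ≤ 1 * ‖v‖ :=
  P.le_of_opNorm_le (IsStarProjection.norm_le P ⟨hP2, hP⟩) v

/-- Strongly convergent, uniformly bounded operators may be evaluated along a convergent
sequence of vectors. -/
theorem tendsto_apply_of_bounded {S : ℕ → H →L[ℂ] H} {S' : H →L[ℂ] H} {K : ℝ}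
    (hK : ∀ n v, ‖S n v‖ ≤ K * ‖v‖) (hS : ∀ v, Tendsto (fun n => S n v) atTop (𝓝 (S' v)))
    {x : ℕ → H} {y : H} (hx : Tendsto x atTop (𝓝 y)) :
    Tendsto (fun n => S n (x n)) atTop (𝓝 (S' y)) := by
  have h1 : Tendsto (fun n => S n (x n - y)) atTop (𝓝 0) := by
    rw [tendsto_iff_norm_sub_tendsto_zero] at hx
    exact squeeze_zero_norm (fun n => hK n _) (by simpa using hx.const_mul K)
  have := h1.add (hS y)
  simpa using this

end Projection

/-! ### Hilbert–Schmidt norms and the trace -/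

section HilbertSchmidt

variable {H : Type*} [NormedAddCommGroup H] [InnerProductSpace ℂ H] [CompleteSpace H]
  {ι : Type*} (e : HilbertBasis ι ℂ H)

/-- The squared Hilbert–Schmidt norm `∑_i ‖T e_i‖²` with values in `[0,∞]`, so that no
summability has to be carried along. -/
noncomputable def hsSq (T : H →L[ℂ] H) : ℝ≥0∞ := ∑' i, ‖T (e i)‖ₑ ^ 2

theorem enorm_sq_eq_ofReal (x : H) : ‖x‖ₑ ^ 2 = ENNReal.ofReal (‖x‖ ^ 2) := by
  rw [ENNReal.ofReal_pow (norm_nonneg _), ofReal_norm]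

theorem hsSq_ne_top_iff (T : H →L[ℂ] H) :
    hsSq e T ≠ ⊤ ↔ Summable fun i => ‖T (e i)‖ ^ 2 := by
  simp only [hsSq, enorm_sq_eq_ofReal]
  constructor
  · intro h
    have := ENNReal.summable_toReal h
    simpa [ENNReal.toReal_ofReal, sq_nonneg] using this
  · intro h
    exact h.tsum_ofReal_ne_top

theorem enorm_sq_eq_tsum_inner (x : H) : ‖x‖ₑ ^ 2 = ∑' j, ‖⟪e j, x⟫_ℂ‖ₑ ^ 2 := by
  have h : HasSum (fun j => ‖⟪e j, x⟫_ℂ‖ ^ 2) (‖x‖ ^ 2) := by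
    have h := Complex.hasSum_re (e.hasSum_inner_mul_inner x x)
    have hx : (⟪x, x⟫_ℂ).re = ‖x‖ ^ 2 := by simpa using (inner_self_eq_norm_sq (𝕜 := ℂ) x)
    rw [hx] at h
    refine h.congr_fun fun j => ?_
    rw [← inner_conj_symm x (e j), Complex.conj_mul']
    norm_cast
  rw [enorm_sq_eq_ofReal, ← h.tsum_eq, ENNReal.ofReal_tsum_of_nonneg (fun _ => sq_nonneg _)
    h.summable]
  simp only [ENNReal.ofReal_pow (norm_nonneg _), ofReal_norm]

/-- The Hilbert–Schmidt norm is invariant under adjoints: expand both sides by Parseval and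
exchange the two sums. -/
theorem hsSq_star (T : H →L[ℂ] H) : hsSq e (star T) = hsSq e T := by
  simp only [hsSq, enorm_sq_eq_tsum_inner e (T _), enorm_sq_eq_tsum_inner e ((star T) _)]
  rw [ENNReal.tsum_comm]
  refine tsum_congr fun i => tsum_congr fun j => ?_
  rw [ContinuousLinearMap.star_eq_adjoint, ContinuousLinearMap.adjoint_inner_right,
    ← inner_conj_symm, RCLike.enorm_conj]

theorem hsSq_mul_le {S T : H →L[ℂ] H} {K : ℝ} (hK : ∀ v, ‖S v‖ ≤ K * ‖v‖) :
    hsSq e (S * T) ≤ ENNReal.ofReal (K ^ 2) * hsSq e T := by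
  rw [hsSq, hsSq, ← ENNReal.tsum_mul_left]
  refine ENNReal.tsum_le_tsum fun i => ?_
  rw [enorm_sq_eq_ofReal, enorm_sq_eq_ofReal, ← ENNReal.ofReal_mul (sq_nonneg _), ← mul_pow]
  exact ENNReal.ofReal_le_ofReal (pow_le_pow_left₀ (norm_nonneg _) (hK _) 2)

theorem hsSq_add_le (S T : H →L[ℂ] H) : hsSq e (S + T) ≤ 2 * hsSq e S + 2 * hsSq e T := by
  rw [hsSq, hsSq, hsSq, ← ENNReal.tsum_mul_left, ← ENNReal.tsum_mul_left, ← ENNReal.tsum_add]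
  refine ENNReal.tsum_le_tsum fun i => ?_
  have h2 : (2 : ℝ≥0∞) = ENNReal.ofReal 2 := by simp
  rw [enorm_sq_eq_ofReal, enorm_sq_eq_ofReal, enorm_sq_eq_ofReal, h2,
    ← ENNReal.ofReal_mul zero_le_two, ← ENNReal.ofReal_mul zero_le_two,
    ← ENNReal.ofReal_add (by positivity) (by positivity)]
  refine ENNReal.ofReal_le_ofReal ?_
  have h := norm_add_le (S (e i)) (T (e i))
  have h' := norm_nonneg (S (e i) + T (e i))
  rw [_root_.add_apply]
  nlinarith [sq_nonneg (‖S (e i)‖ - ‖T (e i)‖)]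

/-- Left multiplication of a Hilbert–Schmidt operator by a bounded strongly null sequence is
null in Hilbert–Schmidt norm, by dominated convergence for the sum over the basis. -/
theorem hsSq_tendsto_zero {S : ℕ → H →L[ℂ] H} {T : H →L[ℂ] H} {K : ℝ}
    (hT : hsSq e T ≠ ⊤) (hK : ∀ n v, ‖S n v‖ ≤ K * ‖v‖)
    (hS : ∀ v, Tendsto (fun n => S n v) atTop (𝓝 0)) :
    Tendsto (fun n => hsSq e (S n * T)) atTop (𝓝 0) := by
  have hs := (hsSq_ne_top_iff e T).1 hT
  have hb : ∀ n i, ‖(S n * T) (e i)‖ ^ 2 ≤ K ^ 2 * ‖T (e i)‖ ^ 2 := fun n i => by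
    rw [← mul_pow]
    exact pow_le_pow_left₀ (norm_nonneg _) (hK _ _) 2
  have h : Tendsto (fun n => ∑' i, ‖(S n * T) (e i)‖ ^ 2) atTop (𝓝 (∑' _ : ι, (0:ℝ))) := by
    refine tendsto_tsum_of_dominated_convergence (hs.mul_left (K ^ 2)) (fun i => ?_)
      (Eventually.of_forall fun n i => ?_)
    · simpa using ((hS (T (e i))).norm.pow 2)
    · rw [Real.norm_of_nonneg (sq_nonneg _)]
      exact hb n i
  have h' := ENNReal.tendsto_ofReal h
  rw [tsum_zero, ENNReal.ofReal_zero] at h'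
  refine h'.congr fun n => ?_
  rw [ENNReal.ofReal_tsum_of_nonneg (fun _ => sq_nonneg _)
    (Summable.of_nonneg_of_le (fun _ => sq_nonneg _) (hb n) (hs.mul_left (K ^ 2)))]
  simp only [hsSq, enorm_sq_eq_ofReal]

/-- Hilbert–Schmidt convergence of `Sₙ Tₙ` to `S T`, for bounded strongly convergent `Sₙ` and
Hilbert–Schmidt convergent `Tₙ`. -/
theorem hsSq_mul_tendsto {S T : ℕ → H →L[ℂ] H} {S' T' : H →L[ℂ] H} {K : ℝ}
    (hT' : hsSq e T' ≠ ⊤) (hK : ∀ n v, ‖S n v‖ ≤ K * ‖v‖) (hK' : ∀ v, ‖S' v‖ ≤ K * ‖v‖)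
    (hS : ∀ v, Tendsto (fun n => S n v) atTop (𝓝 (S' v)))
    (hT : Tendsto (fun n => hsSq e (T n - T')) atTop (𝓝 0)) :
    Tendsto (fun n => hsSq e (S n * T n - S' * T')) atTop (𝓝 0) := by
  have h1 : Tendsto (fun n => hsSq e ((S n - S') * T')) atTop (𝓝 0) := by
    refine hsSq_tendsto_zero e (K := K + K) hT' (fun n v => ?_) (fun v => ?_)
    · have := (norm_sub_le (S n v) (S' v)).trans (add_le_add (hK n v) (hK' v))
      rwa [← add_mul] at this
    · simpa using (hS v).sub_const (S' v)
  have h2 : Tendsto (fun n => ENNReal.ofReal (K ^ 2) * hsSq e (T n - T')) atTop (𝓝 0) := by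
    simpa using ENNReal.Tendsto.const_mul hT (Or.inr ENNReal.ofReal_ne_top)
  have h3 := (ENNReal.Tendsto.const_mul (a := 2) h2 (Or.inr (by simp))).add
    (ENNReal.Tendsto.const_mul (a := 2) h1 (Or.inr (by simp)))
  simp only [mul_zero, add_zero] at h3
  refine tendsto_of_tendsto_of_tendsto_of_le_of_le tendsto_const_nhds h3 (fun _ => zero_le)
    fun n => ?_
  have : S n * T n - S' * T' = S n * (T n - T') + (S n - S') * T' := by noncomm_ring
  dsimp only
  rw [this]
  refine (hsSq_add_le e _ _).trans ?_
  gcongr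
  exact hsSq_mul_le e (hK n)

/-- A Hilbert–Schmidt operator, viewed as the square-summable family `(T e_i)_i`. -/
noncomputable def hsLp (T : H →L[ℂ] H) (hT : hsSq e T ≠ ⊤) : lp (fun _ : ι => H) 2 :=
  ⟨fun i => T (e i), memℓp_gen (by simpa using (hsSq_ne_top_iff e T).1 hT)⟩

theorem hsLp_dist_sq {S T : H →L[ℂ] H} (hS : hsSq e S ≠ ⊤) (hT : hsSq e T ≠ ⊤) :
    ENNReal.ofReal (‖hsLp e S hS - hsLp e T hT‖ ^ 2) = hsSq e (S - T) := by
  have h := lp.norm_rpow_eq_tsum (p := 2) (by simp) (hsLp e S hS - hsLp e T hT)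
  have hm := (lp.memℓp (hsLp e S hS - hsLp e T hT)).summable (by simp)
  simp only [ENNReal.toReal_ofNat, Real.rpow_ofNat] at h hm
  rw [h, ENNReal.ofReal_tsum_of_nonneg (fun _ => sq_nonneg _) hm]
  simp only [hsSq, enorm_sq_eq_ofReal]
  rfl

theorem hsLp_tendsto {T : ℕ → H →L[ℂ] H} {T' : H →L[ℂ] H} (hT : ∀ n, hsSq e (T n) ≠ ⊤)
    (hT' : hsSq e T' ≠ ⊤) (h : Tendsto (fun n => hsSq e (T n - T')) atTop (𝓝 0)) :
    Tendsto (fun n => hsLp e (T n) (hT n)) atTop (𝓝 (hsLp e T' hT')) := by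
  rw [tendsto_iff_norm_sub_tendsto_zero]
  have h1 := (ENNReal.tendsto_toReal ENNReal.zero_ne_top).comp h
  have h2 : Tendsto (fun n => ‖hsLp e (T n) (hT n) - hsLp e T' hT'‖ ^ 2) atTop (𝓝 0) := by
    refine h1.congr fun n => ?_
    simp only [Function.comp, ← hsLp_dist_sq e (hT n) hT', ENNReal.toReal_ofReal (sq_nonneg _)]
  simpa [Real.sqrt_sq] using h2.sqrt

/-- If `⟨x, T x⟩ = ⟨W x, X W x⟩` with `X ≥ 0`, then `tr T` is the Hilbert–Schmidt inner product
of `W` and `X W`. -/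
theorem posTrace_eq_inner {T W X : H →L[ℂ] H} (hW : hsSq e W ≠ ⊤) (hXW : hsSq e (X * W) ≠ ⊤)
    (hX : ∀ u, 0 ≤ (⟪u, X u⟫_ℂ).re) (hT : ∀ x, ⟪x, T x⟫_ℂ = ⟪W x, X (W x)⟫_ℂ) :
    posTrace e T = ENNReal.ofReal (⟪hsLp e W hW, hsLp e (X * W) hXW⟫_ℂ).re := by
  have h : HasSum (fun i => (⟪W (e i), X (W (e i))⟫_ℂ).re)
      (⟪hsLp e W hW, hsLp e (X * W) hXW⟫_ℂ).re :=
    Complex.hasSum_re (lp.hasSum_inner (𝕜 := ℂ) (hsLp e W hW) (hsLp e (X * W) hXW))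
  rw [← h.tsum_eq, ENNReal.ofReal_tsum_of_nonneg (fun i => hX _) h.summable]
  simp only [posTrace, hT]

theorem sandwich_inner {Y Q X : H →L[ℂ] H} (hY : IsSelfAdjoint Y) (hQ : IsSelfAdjoint Q)
    (x : H) : ⟪x, (Y * Q * X * Q * Y) x⟫_ℂ = ⟪(Q * Y) x, X ((Q * Y) x)⟫_ℂ := by
  have hY' := ContinuousLinearMap.isSelfAdjoint_iff_isSymmetric.1 hY
  have hQ' := ContinuousLinearMap.isSelfAdjoint_iff_isSymmetric.1 hQ
  exact (hY' x (Q (X (Q (Y x))))).symm.trans (hQ' (Y x) (X (Q (Y x)))).symm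

end HilbertSchmidt

/-- For bounded selfadjoint `0 ≤ A, B ≤ 1` on a separable complex Hilbert space with
`Q = A − B` Hilbert–Schmidt, and a nondecreasing sequence of finite-rank orthogonal
projections `Pₙ → 1` strongly, setting `Aₙ = Pₙ A Pₙ`, `Bₙ = Pₙ B Pₙ`, `Qₙ = Aₙ − Bₙ`:
for every fixed `λ ∈ (−1,1)` and `t ≥ 0`, the traces
`tr[R_{λ,t}(Bₙ) Qₙ R_{λ,t}(Aₙ) Qₙ R_{λ,t}(Bₙ)]` are finite and converge to the (finite)
trace `tr[R_{λ,t}(B) Q R_{λ,t}(A) Q R_{λ,t}(B)]`. -/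
theorem tendsto_posTrace_resolvent_proj
    {H : Type*} [NormedAddCommGroup H] [InnerProductSpace ℂ H] [CompleteSpace H]
    [TopologicalSpace.SeparableSpace H]
    (A B : H →L[ℂ] H) (hA : IsSelfAdjoint A) (hB : IsSelfAdjoint B)
    (hA0 : 0 ≤ A) (hA1 : A ≤ 1) (hB0 : 0 ≤ B) (hB1 : B ≤ 1)
    {ι : Type*} (e : HilbertBasis ι ℂ H)
    (hHS : Summable fun i : ι => ‖(A - B) (e i)‖^2)
    (P : ℕ → H →L[ℂ] H)
    (hPsa : ∀ n, IsSelfAdjoint (P n))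
    (hPproj : ∀ n, IsIdempotentElem (P n))
    (hPfin : ∀ n, FiniteDimensional ℂ (LinearMap.range (P n : H →ₗ[ℂ] H)))
    (hPmono : Monotone P)
    (hPstrong : ∀ x : H, Tendsto (fun n => P n x) atTop (𝓝 x))
    (l t : ℝ) (hl : l ∈ Set.Ioo (-1:ℝ) 1) (ht : 0 ≤ t) :
    (∀ n : ℕ, posTrace e
        (resolventOp l t (P n * B * P n) * (P n * A * P n - P n * B * P n)
          * resolventOp l t (P n * A * P n) * (P n * A * P n - P n * B * P n)
          * resolventOp l t (P n * B * P n)) ≠ ⊤) ∧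
    posTrace e (resolventOp l t B * (A - B) * resolventOp l t A * (A - B)
      * resolventOp l t B) ≠ ⊤ ∧
    Tendsto (fun n : ℕ => posTrace e
        (resolventOp l t (P n * B * P n) * (P n * A * P n - P n * B * P n)
          * resolventOp l t (P n * A * P n) * (P n * A * P n - P n * B * P n)
          * resolventOp l t (P n * B * P n))) atTop
      (𝓝 (posTrace e (resolventOp l t B * (A - B) * resolventOp l t A * (A - B)
        * resolventOp l t B))) := by
  have hc : 0 < 1 - |l| + t := by
    have := abs_lt.2 hl
    linarith
  set K := (1 - |l| + t)⁻¹ with hKdef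
  have bdR : ∀ {C : H →L[ℂ] H}, 0 ≤ C → C ≤ 1 → ∀ v, ‖resolventOp l t C v‖ ≤ K * ‖v‖ :=
    fun h0 h1 v => resolventOp_norm_apply_le h0 h1 hc v
  have hAn0 := fun n => compress_nonneg hA0 (hPsa n)
  have hBn0 := fun n => compress_nonneg hB0 (hPsa n)
  have hAn1 := fun n => compress_le_one hA1 (hPsa n) (hPproj n)
  have hBn1 := fun n => compress_le_one hB1 (hPsa n) (hPproj n)
  have bdP := fun n v => proj_norm_apply_le (hPsa n) (hPproj n) v
  have hcomp : ∀ (C : H →L[ℂ] H) v, Tendsto (fun n => (P n * C * P n) v) atTop (𝓝 (C v)) :=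
    fun C v => tendsto_apply_of_bounded (S' := 1) bdP hPstrong
      ((C.continuous.tendsto v).comp (hPstrong v))
  have hXlim := resolventOp_tendsto hA0 hA1 hAn0 hAn1 hc (hcomp A)
  have hYlim := resolventOp_tendsto hB0 hB1 hBn0 hBn1 hc (hcomp B)
  have hYsa : IsSelfAdjoint (resolventOp l t B) := resolventOp_isSelfAdjoint l t hB
  have hYnsa : ∀ n, IsSelfAdjoint (resolventOp l t (P n * B * P n)) := fun n =>
    resolventOp_isSelfAdjoint l t (.of_nonneg (hBn0 n))
  have hQsa : IsSelfAdjoint (A - B) := hA.sub hB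
  have hQnsa : ∀ n, IsSelfAdjoint (P n * A * P n - P n * B * P n) := fun n =>
    (IsSelfAdjoint.of_nonneg (hAn0 n)).sub (.of_nonneg (hBn0 n))
  set Q := A - B with hQ
  have hQn : ∀ n, P n * A * P n - P n * B * P n = P n * Q * P n := fun n => by
    rw [hQ]; noncomm_ring
  set X := resolventOp l t A with hX
  set Y := resolventOp l t B with hY
  set Xn : ℕ → H →L[ℂ] H := fun n => resolventOp l t (P n * A * P n) with hXn
  set Yn : ℕ → H →L[ℂ] H := fun n => resolventOp l t (P n * B * P n) with hYn
  have hHSQ : hsSq e Q ≠ ⊤ := (hsSq_ne_top_iff e Q).2 hHS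
  have hsm : ∀ {S T : H →L[ℂ] H} {k : ℝ}, (∀ v, ‖S v‖ ≤ k * ‖v‖) → hsSq e T ≠ ⊤ →
      hsSq e (S * T) ≠ ⊤ := fun hk hT =>
    ne_top_of_le_ne_top (ENNReal.mul_ne_top ENNReal.ofReal_ne_top hT) (hsSq_mul_le e hk)
  have bdY : ∀ v, ‖Y v‖ ≤ K * ‖v‖ := bdR hB0 hB1
  have bdX : ∀ v, ‖X v‖ ≤ K * ‖v‖ := bdR hA0 hA1
  have bdXn : ∀ n v, ‖Xn n v‖ ≤ K * ‖v‖ := fun n => bdR (hAn0 n) (hAn1 n)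
  have bdYP : ∀ n v, ‖(Yn n * P n) v‖ ≤ K * ‖v‖ := fun n v =>
    (bdR (hBn0 n) (hBn1 n) (P n v)).trans
      (mul_le_mul_of_nonneg_left (by simpa using bdP n v) (inv_nonneg.2 hc.le))
  have sQY : star (Y * Q) = Q * Y := by rw [star_mul, hYsa.star_eq, hQsa.star_eq]
  have sQYn : ∀ n, star (Yn n * P n * Q) = Q * (P n * Yn n) := fun n => by
    rw [star_mul, star_mul, (hYnsa n).star_eq, hQsa.star_eq, (hPsa n).star_eq]
  -- `W = Q Y` and `Wₙ = Qₙ Yₙ` are Hilbert–Schmidt, and `Wₙ → W`; the factors to the right of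
  -- `Q` are moved to its left by taking adjoints.
  have hW : hsSq e (Q * Y) ≠ ⊤ := by
    rw [← sQY, hsSq_star]
    exact hsm bdY hHSQ
  have hV : ∀ n, hsSq e (Q * (P n * Yn n)) ≠ ⊤ := fun n => by
    rw [← sQYn, hsSq_star]
    exact hsm (bdYP n) hHSQ
  have hWn_eq : ∀ n, P n * Q * P n * Yn n = P n * (Q * (P n * Yn n)) := fun n => by
    noncomm_ring
  have hWn : ∀ n, hsSq e (P n * Q * P n * Yn n) ≠ ⊤ := fun n => by
    rw [hWn_eq]
    exact hsm (bdP n) (hV n)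
  have hVlim : Tendsto (fun n => hsSq e (Q * (P n * Yn n) - Q * Y)) atTop (𝓝 0) := by
    have : ∀ n, hsSq e (Q * (P n * Yn n) - Q * Y) = hsSq e (Yn n * P n * Q - Y * Q) :=
      fun n => by rw [← hsSq_star, star_sub, ← sQYn, ← sQY, star_star, star_star]
    simp only [this]
    refine hsSq_mul_tendsto e hHSQ bdYP bdY (fun v => ?_) (by simp [hsSq])
    exact tendsto_apply_of_bounded (fun n => bdR (hBn0 n) (hBn1 n)) hYlim (hPstrong v)
  have hWlim : Tendsto (fun n => hsSq e (P n * Q * P n * Yn n - Q * Y)) atTop (𝓝 0) := by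
    have := hsSq_mul_tendsto e (S' := 1) hW bdP (by simp) hPstrong hVlim
    simpa only [hWn_eq, one_mul] using this
  have hXW := hsm bdX hW
  have hXWn := fun n => hsm (bdXn n) (hWn n)
  have hXWlim := hsSq_mul_tendsto e hW bdXn bdX hXlim hWlim
  have hlim := posTrace_eq_inner e hW hXW (resolventOp_inner_nonneg hA0 hA1 hc)
    (sandwich_inner hYsa hQsa)
  have hseq := fun n => posTrace_eq_inner e (hWn n) (hXWn n)
    (resolventOp_inner_nonneg (hAn0 n) (hAn1 n) hc)
    (sandwich_inner (hYnsa n) (hQn n ▸ hQnsa n))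
  simp only [hQn]
  refine ⟨fun n => ?_, ?_, ?_⟩
  · exact (hseq n).trans_ne ENNReal.ofReal_ne_top
  · exact hlim.trans_ne ENNReal.ofReal_ne_top
  · rw [hlim]
    refine Tendsto.congr (fun n => (hseq n).symm) (ENNReal.tendsto_ofReal ?_)
    exact (Complex.continuous_re.tendsto _).comp
      ((hsLp_tendsto e hWn hW hWlim).inner (hsLp_tendsto e hXWn hXW hXWlim))
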